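/- For all x, y, z ∈ 𝓡, (x ⊕ y) ⊗ z ∼ (x ⊗ z) ⊕ (y ⊗ z). -/

import Mathlib

/-- The ambient space `𝓡` of decimal representations: an integer part together
with a sequence of digits in `{0,…,9}`. -/
abbrev DecimalRep := ℤ × (ℕ → Fin 10)

namespace DecimalRep

open scoped Classical

/-- The truncation `[x]_k = x₀ + ∑_{i=1}^k x_i / 10^i` of `x` up to the `k`-th
digit, as a rational number. -/
def trunc (x : DecimalRep) (k : ℕ) : ℚ :=
  (x.1 : ℚ) + ∑ i ∈ Finset.range k, ((x.2 i : ℕ) : ℚ) / 10 ^ (i + 1)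

/-- The order `⪯` on `𝓡`: `x ⪯ y` iff every truncation of `x` is at most the
corresponding truncation of `y`. -/
def le (x y : DecimalRep) : Prop := ∀ k : ℕ, trunc x k ≤ trunc y k

/-- The strict order `≺` on `𝓡`. -/
def lt (x y : DecimalRep) : Prop := le x y ∧ x ≠ y

/-- Two decimal representations are equivalent ("have no gap") iff there is no
third element lying between them. -/
def equiv (x y : DecimalRep) : Prop :=
  ¬ ∃ z : DecimalRep, z ≠ x ∧ z ≠ y ∧
      ((le x z ∧ le z y) ∨ (le y z ∧ le z x))

/-- `𝓡₉`: decimal representations ending in an infinite string of nines. -/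
def allNines (x : DecimalRep) : Prop := ∃ N : ℕ, ∀ k ≥ N, x.2 k = 9

/-- `ℚ_F`: decimal representations ending in an infinite string of zeros. -/
def finiteDec (x : DecimalRep) : Prop := ∃ N : ℕ, ∀ k ≥ N, x.2 k = 0

/-- The decimal expansion map `ι : ℚ → 𝓡`, satisfying
`[ι(α)]_k = ⌊10^k·α⌋/10^k` for all `k`. -/
def iota (α : ℚ) : DecimalRep :=
  (⌊α⌋, fun k => ⟨(⌊α * 10 ^ (k + 1)⌋ % 10).toNat, by
    have h1 : (0 : ℤ) ≤ ⌊α * 10 ^ (k + 1)⌋ % 10 := Int.emod_nonneg _ (by norm_num)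
    have h2 : ⌊α * 10 ^ (k + 1)⌋ % 10 < 10 := Int.emod_lt_of_pos _ (by norm_num)
    omega⟩)

/-- `M` is a least upper bound of `W` in `(𝓡,⪯)`. -/
def IsLub (W : Set DecimalRep) (M : DecimalRep) : Prop :=
  (∀ w ∈ W, le w M) ∧ ∀ M' : DecimalRep, (∀ w ∈ W, le w M') → le M M'

/-- `M` is a greatest lower bound of `W` in `(𝓡,⪯)`. -/
def IsGlb (W : Set DecimalRep) (M : DecimalRep) : Prop :=
  (∀ w ∈ W, le M w) ∧ ∀ M' : DecimalRep, (∀ w ∈ W, le M' w) → le M' M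

/-- The least upper bound of a set in `(𝓡,⪯)` (junk value if none exists). -/
noncomputable def sup (W : Set DecimalRep) : DecimalRep :=
  if h : ∃ M, IsLub W M then h.choose else default

/-- The greatest lower bound of a set in `(𝓡,⪯)` (junk value if none exists). -/
noncomputable def inf (W : Set DecimalRep) : DecimalRep :=
  if h : ∃ M, IsGlb W M then h.choose else default

/-- Addition `x ⊕ y := sup {ι([x]_k + [y]_k) : k ∈ ℕ}` on `𝓡`. -/
noncomputable def add (x y : DecimalRep) : DecimalRep :=
  sup { z | ∃ k : ℕ, z = iota (trunc x k + trunc y k) }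

/-- The "additive inverse" map `Ψ(x₀.x₁x₂⋯) = (−1−x₀).(9−x₁)(9−x₂)⋯`. -/
def psi (x : DecimalRep) : DecimalRep :=
  (-1 - x.1, fun k => ⟨9 - (x.2 k).val, by have := (x.2 k).isLt; omega⟩)

/-- The signal map: `0` on the nonnegative part, `1` on the negative part. -/
noncomputable def sign (x : DecimalRep) : ℕ :=
  if le (iota 0) x then 0 else 1

/-- The absolute value `‖x‖ := max {x, Ψ(x)}` with respect to `⪯`. -/
noncomputable def norm (x : DecimalRep) : DecimalRep :=
  if le x (psi x) then psi x else x

/-- Multiplication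
`x ⊗ y := Ψ^(sign x + sign y) (sup {ι([‖x‖]_k · [‖y‖]_k) : k ∈ ℕ})` on `𝓡`. -/
noncomputable def mul (x y : DecimalRep) : DecimalRep :=
  psi^[sign x + sign y]
    (sup { z | ∃ k : ℕ, z = iota (trunc (norm x) k * trunc (norm y) k) })

/-- The multiplicative inverse
`x⁻¹ := Ψ^(sign x) (inf {ι(1/[‖x‖]_k) : k ∈ ℕ, [‖x‖]_k > 0})`. -/
noncomputable def inv (x : DecimalRep) : DecimalRep :=
  psi^[sign x]
    (inf { z | ∃ k : ℕ, 0 < trunc (norm x) k ∧ z = iota (1 / trunc (norm x) k) })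

/-- A sequence of rationals is Cauchy. -/
def IsCauchy (x : ℕ → ℚ) : Prop :=
  ∀ ε : ℚ, 0 < ε → ∃ N : ℕ, ∀ m n : ℕ, N ≤ m → N ≤ n → |x m - x n| < ε

/-- The upper limit `inf { sup {f k : k ≥ n} : n ∈ ℕ }` of a sequence in `𝓡`. -/
noncomputable def upperLimit (f : ℕ → DecimalRep) : DecimalRep :=
  inf { z | ∃ n : ℕ, z = sup { w | ∃ k : ℕ, n ≤ k ∧ w = f k } }

/-- The lower limit `sup { inf {f k : k ≥ n} : n ∈ ℕ }` of a sequence in `𝓡`. -/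
noncomputable def lowerLimit (f : ℕ → DecimalRep) : DecimalRep :=
  sup { z | ∃ n : ℕ, z = inf { w | ∃ k : ℕ, n ≤ k ∧ w = f k } }

end DecimalRep

/-!
Let `toReal : 𝓡 → ℝ` be the evaluation of decimal representations. It turns `⊕` and `⊗` into the
addition and multiplication of `ℝ`, because it sends suprema in `𝓡` to suprema in `ℝ` and `Ψ` to
negation. Two representations of the same real number have no gap between them: an element
strictly between them would have to end both in zeros and in nines. Hence every ring identity of
`ℝ` holds in `𝓡` up to `∼`.
-/

namespace DecimalRep

open Filter Topology

/-- The integer `10^k·[x]_k`. Working with it instead of `trunc` turns comparisons of truncations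
into comparisons of integers. -/
def scaledTrunc (x : DecimalRep) : ℕ → ℤ
  | 0 => x.1
  | k + 1 => 10 * scaledTrunc x k + (x.2 k : ℕ)

theorem trunc_eq_scaledTrunc_div (x : DecimalRep) (k : ℕ) :
    trunc x k = scaledTrunc x k / 10 ^ k := by
  induction k with
  | zero => simp [trunc, scaledTrunc]
  | succ k ih =>
    rw [trunc, Finset.sum_range_succ, ← add_assoc, ← trunc, ih, scaledTrunc]
    push_cast
    field_simp
    ring

theorem scaledTrunc_succ_div_ten (x : DecimalRep) (k : ℕ) :
    scaledTrunc x (k + 1) / 10 = scaledTrunc x k := by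
  rw [scaledTrunc]
  omega

theorem scaledTrunc_injective : Function.Injective scaledTrunc := by
  intro x y h
  refine Prod.ext (congrFun h 0) (funext fun k => Fin.ext ?_)
  have hk := congrFun h k
  have hsucc := congrFun h (k + 1)
  rw [scaledTrunc, scaledTrunc] at hsucc
  omega

theorem scaledTrunc_neg_iff (x : DecimalRep) (k : ℕ) : scaledTrunc x k < 0 ↔ x.1 < 0 := by
  induction k with
  | zero => rfl
  | succ k ih => rw [← ih, scaledTrunc]; omega

theorem trunc_le_trunc_iff {x y : DecimalRep} {k : ℕ} :
    trunc x k ≤ trunc y k ↔ scaledTrunc x k ≤ scaledTrunc y k := by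
  rw [trunc_eq_scaledTrunc_div, trunc_eq_scaledTrunc_div,
    div_le_div_iff_of_pos_right (by positivity), Int.cast_le]

theorem le_iff {x y : DecimalRep} : le x y ↔ ∀ k, scaledTrunc x k ≤ scaledTrunc y k :=
  forall_congr' fun _ => trunc_le_trunc_iff

protected theorem le_antisymm {x y : DecimalRep} (hxy : le x y) (hyx : le y x) : x = y :=
  scaledTrunc_injective <| funext fun k => le_antisymm (le_iff.1 hxy k) (le_iff.1 hyx k)

theorem exists_trunc_lt {x y : DecimalRep} (h : le x y) (hne : x ≠ y) :
    ∃ k, trunc x k < trunc y k := by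
  by_contra! hyx
  exact hne (DecimalRep.le_antisymm h hyx)

theorem trunc_add_le_of_trunc_lt {x y : DecimalRep} {k : ℕ} (h : trunc x k < trunc y k) :
    trunc x k + (10 ^ k)⁻¹ ≤ trunc y k := by
  have hlt : scaledTrunc x k < scaledTrunc y k := by
    rwa [← not_le, trunc_le_trunc_iff, not_le] at h
  have hle : (scaledTrunc x k + 1 : ℚ) ≤ scaledTrunc y k := mod_cast hlt
  rw [trunc_eq_scaledTrunc_div, trunc_eq_scaledTrunc_div, inv_eq_one_div, ← add_div]
  gcongr

theorem monotone_trunc (x : DecimalRep) : Monotone (trunc x) := fun _ _ h => by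
  unfold trunc
  gcongr

theorem exists_scaledTrunc_eq (c : ℕ → ℤ) (hc : ∀ n, c (n + 1) / 10 = c n) :
    ∃ x, scaledTrunc x = c := by
  refine ⟨(c 0, fun k => ⟨(c (k + 1) % 10).toNat, by omega⟩), funext fun k => ?_⟩
  induction k with
  | zero => rfl
  | succ k ih =>
    have := hc k
    simp only [scaledTrunc, ih]
    omega

theorem scaledTrunc_iota (α : ℚ) (k : ℕ) : scaledTrunc (iota α) k = ⌊α * 10 ^ k⌋ := by
  induction k with
  | zero => simp [scaledTrunc, iota]
  | succ k ih =>
    have hdiv : ⌊α * 10 ^ (k + 1)⌋ / 10 = ⌊α * 10 ^ k⌋ := by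
      rw [pow_succ, ← mul_assoc]
      exact_mod_cast Int.mul_natCast_floor_div_cancel (n := 10) (by norm_num) (α * 10 ^ k)
    rw [scaledTrunc, ih, iota]
    dsimp only
    omega

theorem scaledTrunc_psi (x : DecimalRep) (k : ℕ) :
    scaledTrunc (psi x) k = -1 - scaledTrunc x k := by
  induction k with
  | zero => rfl
  | succ k ih =>
    rw [scaledTrunc, scaledTrunc, ih, psi]
    dsimp only
    omega

theorem trunc_psi (x : DecimalRep) (k : ℕ) : trunc (psi x) k = -(trunc x k + (10 ^ k)⁻¹) := by
  rw [trunc_eq_scaledTrunc_div, trunc_eq_scaledTrunc_div, scaledTrunc_psi]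
  push_cast
  ring

theorem antitone_trunc_add (x : DecimalRep) : Antitone fun k => trunc x k + (10 ^ k)⁻¹ :=
  fun i j h => by simpa only [trunc_psi, neg_le_neg_iff] using monotone_trunc (psi x) h

/-- The real number `x₀ + 0.x₁x₂x₃⋯` represented by `x`. -/
noncomputable def toReal (x : DecimalRep) : ℝ := x.1 + Real.ofDigits x.2

theorem toReal_eq_trunc_add (x : DecimalRep) (k : ℕ) :
    toReal x = trunc x k + (10 ^ k)⁻¹ * Real.ofDigits fun i => x.2 (i + k) := by
  rw [toReal, Real.ofDigits_eq_sum_add_ofDigits x.2 k, trunc]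
  simp [Real.ofDigitsTerm, div_eq_mul_inv, add_assoc]

theorem trunc_le_toReal (x : DecimalRep) (k : ℕ) : (trunc x k : ℝ) ≤ toReal x := by
  rw [toReal_eq_trunc_add x k]
  exact le_add_of_nonneg_right (mul_nonneg (by positivity) (Real.ofDigits_nonneg _))

theorem toReal_le_trunc_add (x : DecimalRep) (k : ℕ) :
    toReal x ≤ (trunc x k + (10 ^ k)⁻¹ : ℚ) := by
  rw [toReal_eq_trunc_add x k]
  push_cast
  gcongr
  exact mul_le_of_le_one_right (by positivity) (Real.ofDigits_le_one _)

theorem tendsto_trunc_of_mem_Icc {x : DecimalRep} {r : ℝ}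
    (h : ∀ k, r ∈ Set.Icc (trunc x k : ℝ) (trunc x k + (10 ^ k)⁻¹ : ℚ)) :
    Tendsto (fun k => (trunc x k : ℝ)) atTop (𝓝 r) := by
  have hpow : Tendsto (fun k : ℕ => ((10 : ℝ) ^ k)⁻¹) atTop (𝓝 0) :=
    tendsto_inv_atTop_zero.comp (tendsto_pow_atTop_atTop_of_one_lt (by norm_num))
  have hsub : Tendsto (fun k : ℕ => r - (10 ^ k)⁻¹) atTop (𝓝 r) := by
    simpa only [sub_zero] using tendsto_const_nhds.sub hpow
  exact tendsto_of_tendsto_of_tendsto_of_le_of_le hsub tendsto_const_nhds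
    (fun k => sub_le_iff_le_add.2 (by simpa using (h k).2)) (fun k => (h k).1)

theorem tendsto_trunc (x : DecimalRep) :
    Tendsto (fun k => (trunc x k : ℝ)) atTop (𝓝 (toReal x)) :=
  tendsto_trunc_of_mem_Icc fun k => ⟨trunc_le_toReal x k, toReal_le_trunc_add x k⟩

theorem toReal_eq_of_mem_Icc {x : DecimalRep} {r : ℝ}
    (h : ∀ k, r ∈ Set.Icc (trunc x k : ℝ) (trunc x k + (10 ^ k)⁻¹ : ℚ)) : toReal x = r :=
  tendsto_nhds_unique (tendsto_trunc x) (tendsto_trunc_of_mem_Icc h)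

theorem toReal_mono {x y : DecimalRep} (h : le x y) : toReal x ≤ toReal y :=
  le_of_tendsto_of_tendsto' (tendsto_trunc x) (tendsto_trunc y) fun k => mod_cast h k

theorem toReal_psi (x : DecimalRep) : toReal (psi x) = -toReal x := by
  refine toReal_eq_of_mem_Icc fun k => ?_
  have hadd : trunc (psi x) k + (10 ^ k)⁻¹ = -trunc x k := by rw [trunc_psi]; ring
  rw [hadd, trunc_psi, Rat.cast_neg, Rat.cast_neg]
  exact ⟨neg_le_neg (toReal_le_trunc_add x k), neg_le_neg (trunc_le_toReal x k)⟩

theorem toReal_iterate_psi (n : ℕ) (x : DecimalRep) :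
    toReal (psi^[n] x) = (-1) ^ n * toReal x := by
  induction n with
  | zero => simp
  | succ n ih => rw [Function.iterate_succ_apply', toReal_psi, ih, pow_succ]; ring

theorem toReal_iota (α : ℚ) : toReal (iota α) = α := by
  refine toReal_eq_of_mem_Icc fun k => ?_
  have hlower : trunc (iota α) k ≤ α := by
    rw [trunc_eq_scaledTrunc_div, scaledTrunc_iota, div_le_iff₀ (by positivity)]
    exact Int.floor_le _
  have hupper : α ≤ trunc (iota α) k + (10 ^ k)⁻¹ := by
    rw [trunc_eq_scaledTrunc_div, scaledTrunc_iota, inv_eq_one_div, ← add_div,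
      le_div_iff₀ (by positivity)]
    exact (Int.lt_floor_add_one _).le
  exact ⟨Rat.cast_le.2 hlower, Rat.cast_le.2 hupper⟩

/-- Writing `r` for the common value, `[x]_k < [y]_k` forces
`r ≤ [x]_k + 10^(-k) ≤ [y]_k ≤ r`: from the `k`-th digit on, `x` has only nines and `y` only
zeros. -/
theorem toReal_eq_of_trunc_lt {x y : DecimalRep} {k : ℕ} (hxy : toReal x = toReal y)
    (hk : trunc x k < trunc y k) :
    toReal x = (trunc x k + (10 ^ k)⁻¹ : ℚ) ∧ toReal y = trunc y k := by
  have hstep : ((trunc x k + (10 ^ k)⁻¹ : ℚ) : ℝ) ≤ trunc y k :=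
    Rat.cast_le.2 (trunc_add_le_of_trunc_lt hk)
  constructor <;> linarith [toReal_le_trunc_add x k, trunc_le_toReal y k]

theorem trunc_lt_trunc_add (x : DecimalRep) (i j : ℕ) : trunc x i < trunc x j + (10 ^ j)⁻¹ :=
  calc
    trunc x i ≤ trunc x (max i j) := monotone_trunc x (le_max_left i j)
    _ < trunc x (max i j) + (10 ^ max i j)⁻¹ := lt_add_of_pos_right _ (by positivity)
    _ ≤ trunc x j + (10 ^ j)⁻¹ := antitone_trunc_add x (le_max_right i j)

theorem eq_or_eq_of_toReal_eq_of_le_of_le {x y z : DecimalRep} (hxy : toReal x = toReal y)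
    (hxz : le x z) (hzy : le z y) : z = x ∨ z = y := by
  by_contra! hne
  have hxz_real : toReal x = toReal z :=
    le_antisymm (toReal_mono hxz) (hxy ▸ toReal_mono hzy)
  obtain ⟨i, hi⟩ := exists_trunc_lt hxz hne.1.symm
  obtain ⟨j, hj⟩ := exists_trunc_lt hzy hne.2
  have hzeros : toReal z = trunc z i := (toReal_eq_of_trunc_lt hxz_real hi).2
  have hnines : toReal z = (trunc z j + (10 ^ j)⁻¹ : ℚ) :=
    (toReal_eq_of_trunc_lt (hxz_real.symm.trans hxy) hj).1
  exact (trunc_lt_trunc_add z i j).ne (Rat.cast_injective (hzeros.symm.trans hnines))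

theorem equiv_of_toReal_eq {x y : DecimalRep} (h : toReal x = toReal y) : equiv x y := by
  rintro ⟨z, hne_x, hne_y, ⟨hxz, hzy⟩ | ⟨hyz, hzx⟩⟩
  · exact (eq_or_eq_of_toReal_eq_of_le_of_le h hxz hzy).elim hne_x hne_y
  · exact (eq_or_eq_of_toReal_eq_of_le_of_le h.symm hyz hzx).elim hne_y hne_x

section Sup

variable {W : Set DecimalRep} {M : DecimalRep}

/-- Taking the largest `k`-th truncation for each `k` gives a consistent system of truncations
because `n ↦ n / 10`, which drops the last digit, is monotone. -/
theorem exists_forall_isGreatest_scaledTrunc (hne : W.Nonempty) (hbdd : BddAbove (toReal '' W)) :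
    ∃ M, ∀ k, IsGreatest ((scaledTrunc · k) '' W) (scaledTrunc M k) := by
  obtain ⟨b, hb⟩ := hbdd
  have hbdd_k (k : ℕ) : BddAbove ((scaledTrunc · k) '' W) := by
    refine ⟨⌊b * 10 ^ k⌋, ?_⟩
    rintro _ ⟨w, hw, rfl⟩
    have hle : (trunc w k : ℝ) ≤ b := (trunc_le_toReal w k).trans (hb ⟨w, hw, rfl⟩)
    rw [trunc_eq_scaledTrunc_div] at hle
    push_cast at hle
    exact Int.le_floor.2 ((div_le_iff₀ (by positivity)).1 hle)
  have hmax (k : ℕ) : IsGreatest ((scaledTrunc · k) '' W) (sSup ((scaledTrunc · k) '' W)) :=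
    ⟨Int.csSup_mem (hne.image _) (hbdd_k k), fun _ hn => le_csSup (hbdd_k k) hn⟩
  have hdiv : Monotone fun n : ℤ => n / 10 := fun _ _ h => Int.ediv_le_ediv (by norm_num) h
  have himage (k : ℕ) :
      (fun n : ℤ => n / 10) '' ((scaledTrunc · (k + 1)) '' W) = (scaledTrunc · k) '' W := by
    simp only [Set.image_image, scaledTrunc_succ_div_ten]
  obtain ⟨M, hM⟩ := exists_scaledTrunc_eq (fun k => sSup ((scaledTrunc · k) '' W)) fun k =>
    (himage k ▸ hdiv.map_isGreatest (hmax (k + 1))).unique (hmax k)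
  exact ⟨M, fun k => hM ▸ hmax k⟩

theorem isLub_of_isGreatest_scaledTrunc
    (hM : ∀ k, IsGreatest ((scaledTrunc · k) '' W) (scaledTrunc M k)) : IsLub W M := by
  refine ⟨fun w hw => le_iff.2 fun k => (hM k).2 ⟨w, hw, rfl⟩, fun B hB => le_iff.2 fun k => ?_⟩
  obtain ⟨w, hw, hwk⟩ := (hM k).1
  exact hwk ▸ le_iff.1 (hB w hw) k

theorem isLUB_toReal_of_isGreatest_scaledTrunc
    (hM : ∀ k, IsGreatest ((scaledTrunc · k) '' W) (scaledTrunc M k)) :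
    IsLUB (toReal '' W) (toReal M) := by
  constructor
  · rintro _ ⟨w, hw, rfl⟩
    exact toReal_mono ((isLub_of_isGreatest_scaledTrunc hM).1 w hw)
  · refine fun b hb => le_of_tendsto' (tendsto_trunc M) fun k => ?_
    obtain ⟨w, hw, hwk : scaledTrunc w k = scaledTrunc M k⟩ := (hM k).1
    rw [trunc_eq_scaledTrunc_div, ← hwk, ← trunc_eq_scaledTrunc_div]
    exact (trunc_le_toReal w k).trans (hb ⟨w, hw, rfl⟩)

theorem IsLub.sup_eq (h : IsLub W M) : sup W = M := by
  have hex : ∃ M, IsLub W M := ⟨M, h⟩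
  rw [sup, dif_pos hex]
  exact DecimalRep.le_antisymm (hex.choose_spec.2 M h.1) (h.2 _ hex.choose_spec.1)

theorem isLUB_toReal_sup (hne : W.Nonempty) (hbdd : BddAbove (toReal '' W)) :
    IsLUB (toReal '' W) (toReal (sup W)) := by
  obtain ⟨M, hM⟩ := exists_forall_isGreatest_scaledTrunc hne hbdd
  rw [(isLub_of_isGreatest_scaledTrunc hM).sup_eq]
  exact isLUB_toReal_of_isGreatest_scaledTrunc hM

theorem toReal_sup_iota {κ : Type*} {a : κ → ℚ} {r : ℝ}
    (h : IsLUB (Set.range fun i => (a i : ℝ)) r) :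
    toReal (sup {z | ∃ i, z = iota (a i)}) = r := by
  have hset : {z | ∃ i, z = iota (a i)} = Set.range (iota ∘ a) := by
    ext z
    simp [eq_comm]
  have himage : toReal '' Set.range (iota ∘ a) = Set.range fun i => (a i : ℝ) := by
    simp [← Set.range_comp, Function.comp_def, toReal_iota]
  rw [← himage] at h
  rw [hset]
  exact (isLUB_toReal_sup h.nonempty.of_image h.bddAbove).unique h

theorem toReal_sup_iota_of_tendsto {a : ℕ → ℚ} {r : ℝ} (ha : Monotone a)
    (hr : Tendsto (fun k => (a k : ℝ)) atTop (𝓝 r)) :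
    toReal (sup {z | ∃ k, z = iota (a k)}) = r :=
  toReal_sup_iota (isLUB_of_tendsto_atTop (Rat.cast_mono.comp ha) hr)

end Sup

theorem toReal_add (x y : DecimalRep) : toReal (add x y) = toReal x + toReal y := by
  refine toReal_sup_iota_of_tendsto ((monotone_trunc x).add (monotone_trunc y)) ?_
  push_cast
  exact (tendsto_trunc x).add (tendsto_trunc y)

theorem sign_eq (x : DecimalRep) : sign x = if x.1 < 0 then 1 else 0 := by
  have hle : le (iota 0) x ↔ ¬x.1 < 0 := by
    simp only [le_iff, scaledTrunc_iota, zero_mul, Int.floor_zero, ← not_lt, scaledTrunc_neg_iff,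
      forall_const]
  simp only [sign, hle, ite_not]

theorem norm_eq (x : DecimalRep) : norm x = if x.1 < 0 then psi x else x := by
  have hle (k : ℕ) : scaledTrunc x k ≤ scaledTrunc (psi x) k ↔ x.1 < 0 := by
    rw [← scaledTrunc_neg_iff x k, scaledTrunc_psi]
    omega
  simp only [norm, le_iff, hle, forall_const]

theorem norm_eq_iterate_psi (x : DecimalRep) : norm x = psi^[sign x] x := by
  rw [norm_eq, sign_eq]
  split_ifs <;> rfl

theorem toReal_norm (x : DecimalRep) : toReal (norm x) = (-1) ^ sign x * toReal x := by
  rw [norm_eq_iterate_psi, toReal_iterate_psi]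

theorem trunc_norm_nonneg (x : DecimalRep) (k : ℕ) : 0 ≤ trunc (norm x) k := by
  have hfst : ¬(norm x).1 < 0 := by
    rw [norm_eq]
    split_ifs with hx
    · simp only [psi]
      omega
    · exact hx
  have hscaled : 0 ≤ scaledTrunc (norm x) k := not_lt.1 ((scaledTrunc_neg_iff _ k).not.2 hfst)
  rw [trunc_eq_scaledTrunc_div]
  positivity

theorem toReal_mul (x y : DecimalRep) : toReal (mul x y) = toReal x * toReal y := by
  have hmono : Monotone fun k => trunc (norm x) k * trunc (norm y) k :=
    (monotone_trunc _).mul (monotone_trunc _) (trunc_norm_nonneg x) (trunc_norm_nonneg y)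
  have hlim : Tendsto (fun k => ((trunc (norm x) k * trunc (norm y) k : ℚ) : ℝ)) atTop
      (𝓝 (toReal (norm x) * toReal (norm y))) := by
    push_cast
    exact (tendsto_trunc _).mul (tendsto_trunc _)
  calc
    toReal (mul x y)
      = (-1) ^ (sign x + sign y) * (toReal (norm x) * toReal (norm y)) := by
        rw [mul, toReal_iterate_psi, toReal_sup_iota_of_tendsto hmono hlim]
    _ = ((-1) ^ sign x * (-1) ^ sign x) * ((-1) ^ sign y * (-1) ^ sign y)
          * (toReal x * toReal y) := by
        rw [toReal_norm, toReal_norm]; ring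
    _ = toReal x * toReal y := by
        simp only [← mul_pow, neg_mul_neg, one_mul, one_pow]

end DecimalRep

open DecimalRep in
/-- Multiplication distributes over addition on `𝓡` up to equivalence. -/
theorem add_mul_equiv (x y z : DecimalRep) :
    equiv (mul (add x y) z) (add (mul x z) (mul y z)) := by
  apply equiv_of_toReal_eq
  simp only [toReal_add, toReal_mul, add_mul]
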